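/- With σ = 12 h^{-2}, the restricted operators A_α = Q_α′ A Q_α on the subspaces S_α of S^2 satisfy, in the spectral sense: A_{00} ≤ (1 + 2σ) M_0 ⊗ M_0 =: L_{00}, A_{01} ≤ M_0 ⊗ ((1+σ)M_1 + K_1) =: L_{01}, A_{10} ≤ ((1+σ)M_1 + K_1) ⊗ M_0 =: L_{10}, and A_{11} = M_1 ⊗ M_1 + K_1 ⊗ M_1 + M_1 ⊗ K_1 =: L_{11}. -/

import Mathlib

noncomputable section

open MeasureTheory Set

namespace SplineMG

/-- The `j`-th piece of the uniform partition of `[0,1]` into `m` subintervals of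
length `h = 1/m`; the first and last pieces are extended to `-∞` resp. `+∞`
(the spline is extended polynomially outside `[0,1]`). -/
def pieceSet (m j : ℕ) : Set ℝ :=
  (if j = 0 then Iic ((1 : ℝ) / m) else Icc ((j : ℝ) / m) (((j : ℝ) + 1) / m)) ∪
  (if j = m - 1 then Ici (((m : ℝ) - 1) / m) else ∅)

/-- `u : ℝ → ℝ` belongs to the univariate spline space `S` of degree `p` and maximal
smoothness `C^{p-1}` on the uniform partition of `(0,1)` into `m` intervals of
length `h = 1/m`. -/
def IsSpline (m p : ℕ) (u : ℝ → ℝ) : Prop :=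
  ContDiffOn ℝ (p - 1 : ℕ) u (Ioo (0 : ℝ) 1) ∧
  ∀ j < m, ∃ q : Polynomial ℝ, q.natDegree ≤ p ∧ ∀ x ∈ pieceSet m j, u x = q.eval x

/-- `u` belongs to the subspace `S₀` of `S`: all odd derivatives of order `< p`
vanish at both endpoints. -/
def IsSpline0 (m p : ℕ) (u : ℝ → ℝ) : Prop :=
  IsSpline m p u ∧
  ∀ l : ℕ, 2 * l + 1 < p →
    iteratedDeriv (2 * l + 1) u 0 = 0 ∧ iteratedDeriv (2 * l + 1) u 1 = 0

/-- The `L²(0,1)` inner product. -/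
def ip0 (u v : ℝ → ℝ) : ℝ := ∫ x in Ioo (0 : ℝ) 1, u x * v x

/-- The squared `L²(0,1)` norm `‖u‖₀²`. -/
def l2normSq (u : ℝ → ℝ) : ℝ := ∫ x in Ioo (0 : ℝ) 1, u x ^ 2

/-- The `L²(0,1)` norm `‖u‖₀`. -/
def l2norm (u : ℝ → ℝ) : ℝ := Real.sqrt (l2normSq u)

/-- The squared `H¹(0,1)` seminorm `|u|₁²`. -/
def h1semiSq (u : ℝ → ℝ) : ℝ := ∫ x in Ioo (0 : ℝ) 1, deriv u x ^ 2

/-- The `H¹(0,1)` seminorm `|u|₁`. -/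
def h1semi (u : ℝ → ℝ) : ℝ := Real.sqrt (h1semiSq u)

/-- The squared full `H¹(0,1)` norm. -/
def h1normSq (u : ℝ → ℝ) : ℝ := l2normSq u + h1semiSq u

/-- `u` belongs to `S₁`, the `L²(0,1)`-orthogonal complement of `S₀` in `S`. -/
def IsSpline1 (m p : ℕ) (u : ℝ → ℝ) : Prop :=
  IsSpline m p u ∧ ∀ v, IsSpline0 m p v → ip0 u v = 0

/-- `v = Q₀ u` is the `L²(0,1)`-orthogonal projection of `u` onto `S₀`. -/
def IsL2Proj0 (m p : ℕ) (u v : ℝ → ℝ) : Prop :=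
  IsSpline0 m p v ∧ ∀ w, IsSpline0 m p w → ip0 (u - v) w = 0

/-- The component predicate: `false ↦ S₀`, `true ↦ S₁`. -/
def IsSplineC (m p : ℕ) : Bool → (ℝ → ℝ) → Prop
  | false => IsSpline0 m p
  | true => IsSpline1 m p

/-- The tensor-product spline space `S^d = S ⊗ ⋯ ⊗ S` on `(0,1)^d`. -/
def TensorSpline (d m p : ℕ) : Submodule ℝ ((Fin d → ℝ) → ℝ) :=
  Submodule.span ℝ {u | ∃ f : Fin d → ℝ → ℝ, (∀ i, IsSpline m p (f i)) ∧
    u = fun x => ∏ i, f i (x i)}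

/-- The subspace `S_α = S_{α₁} ⊗ ⋯ ⊗ S_{α_d}` of `S^d`, for `α ∈ {0,1}^d`
(`false ↦ 0`, `true ↦ 1`). -/
def TensorSplineSub (d m p : ℕ) (α : Fin d → Bool) : Submodule ℝ ((Fin d → ℝ) → ℝ) :=
  Submodule.span ℝ {u | ∃ f : Fin d → ℝ → ℝ, (∀ i, IsSplineC m p (α i) (f i)) ∧
    u = fun x => ∏ i, f i (x i)}

/-- The open unit cube `Ω = (0,1)^d`. -/
def cube (d : ℕ) : Set (Fin d → ℝ) := Set.univ.pi fun _ => Ioo (0 : ℝ) 1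

/-- The `i`-th partial derivative. -/
def pd (d : ℕ) (i : Fin d) (u : (Fin d → ℝ) → ℝ) : (Fin d → ℝ) → ℝ :=
  fun x => deriv (fun t => u (Function.update x i t)) (x i)

/-- The `L²(Ω)` inner product on the unit cube. -/
def ipd (d : ℕ) (u v : (Fin d → ℝ) → ℝ) : ℝ := ∫ x in cube d, u x * v x

/-- The squared `L²(Ω)` norm. -/
def l2normSqD (d : ℕ) (u : (Fin d → ℝ) → ℝ) : ℝ := ∫ x in cube d, u x ^ 2

/-- The bilinear form `a(u,v) = ∫_Ω (∇u·∇v + uv) dx`. -/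
def aForm (d : ℕ) (u v : (Fin d → ℝ) → ℝ) : ℝ :=
  ∫ x in cube d, (∑ i, pd d i u x * pd d i v x) + u x * v x

/-- The squared `H¹(Ω)` seminorm. -/
def h1semiSqD (d : ℕ) (u : (Fin d → ℝ) → ℝ) : ℝ :=
  ∫ x in cube d, ∑ i, pd d i u x ^ 2

/-- The squared full `H¹(Ω)` norm. -/
def h1normSqD (d : ℕ) (u : (Fin d → ℝ) → ℝ) : ℝ := l2normSqD d u + h1semiSqD d u

/-- `v = Q_α u` is the `L²(Ω)`-orthogonal projection of `u` onto `S_α`. -/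
def IsL2ProjSub (d m p : ℕ) (α : Fin d → Bool) (u v : (Fin d → ℝ) → ℝ) : Prop :=
  v ∈ TensorSplineSub d m p α ∧ ∀ w ∈ TensorSplineSub d m p α, ipd d (u - v) w = 0

/-- The coarse tensor-product spline space `(S_c)^d` (with `m/2` knot spans of
width `2h` per direction). -/
def TensorSplineCoarse (d m p : ℕ) : Submodule ℝ ((Fin d → ℝ) → ℝ) :=
  TensorSpline d (m / 2) p

/-- `v = T_c u` is the `a(·,·)`-orthogonal (Galerkin) projection of `u` onto `(S_c)^d`. -/
def IsGalerkinCoarseProj (d m p : ℕ) (u v : (Fin d → ℝ) → ℝ) : Prop :=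
  v ∈ TensorSplineCoarse d m p ∧ ∀ w ∈ TensorSplineCoarse d m p, aForm d (u - v) w = 0

end SplineMG

namespace SplineMG

/-!
Since `a(v, v) = ‖v‖² + ∑ᵢ ‖∂ᵢ v‖²`, it suffices to bound `‖∂ᵢ v‖² ≤ σ ‖v‖²` in every direction with
`αᵢ = 0`. There all slices of `v` along the `i`-th axis lie in `S₀`, so by Fubini this is the
univariate inverse inequality `|u|₁² ≤ 12 h⁻² ‖u‖₀²` on `S₀`. The latter holds by induction on the
degree. For `p = 1` it is an explicit integral on each interval. For `p ≥ 2` the endpoint conditions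
remove the boundary terms from the integration by parts `|u|₁² = -(u, u'')`, and `u'` is a spline of
degree `p - 1` of the same kind, with vanishing even instead of odd derivatives.
-/

section PiecewisePolynomials

open Polynomial

variable {t : ℕ → ℝ} {m p e : ℕ} {q r : ℕ → ℝ[X]}

/-- The polynomials `q j`, `j < m`, are the pieces on `[t j, t (j + 1)]` of a `C^{p-1}` spline of
degree `p` whose derivatives of order `k < p` with `k + e` even vanish at both end knots. For
`e = 1` this describes `S₀`; the even case is included because differentiation swaps the parity. -/
structure IsParitySpline (t : ℕ → ℝ) (m p e : ℕ) (q : ℕ → ℝ[X]) : Prop where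
  natDegree_le : ∀ j < m, (q j).natDegree ≤ p
  eval_knot : ∀ j, j + 1 < m → ∀ k < p,
    (derivative^[k] (q j)).eval (t (j + 1)) = (derivative^[k] (q (j + 1))).eval (t (j + 1))
  eval_first : ∀ k < p, Even (k + e) → (derivative^[k] (q 0)).eval (t 0) = 0
  eval_last : ∀ j, j + 1 = m → ∀ k < p, Even (k + e) → (derivative^[k] (q j)).eval (t m) = 0

/-- The `L²(t 0, t m)` inner product of the piecewise polynomials with pieces `q j` and `r j` on
`[t j, t (j + 1)]`. -/
def pieceInner (t : ℕ → ℝ) (m : ℕ) (q r : ℕ → ℝ[X]) : ℝ :=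
  ∑ j ∈ Finset.range m, ∫ x in t j..t (j + 1), (q j).eval x * (r j).eval x

namespace IsParitySpline

lemma zero : IsParitySpline t m p e 0 := by
  constructor <;> simp

lemma add (hq : IsParitySpline t m p e q) (hr : IsParitySpline t m p e r) :
    IsParitySpline t m p e (q + r) where
  natDegree_le j hj := natDegree_add_le_of_degree_le (hq.natDegree_le j hj) (hr.natDegree_le j hj)
  eval_knot j hj k hk := by
    simp [iterate_map_add, hq.eval_knot j hj k hk, hr.eval_knot j hj k hk]
  eval_first k hk hke := by
    simp [iterate_map_add, hq.eval_first k hk hke, hr.eval_first k hk hke]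
  eval_last j hj k hk hke := by
    simp [iterate_map_add, hq.eval_last j hj k hk hke, hr.eval_last j hj k hk hke]

lemma smul (c : ℝ) (hq : IsParitySpline t m p e q) : IsParitySpline t m p e (c • q) where
  natDegree_le j hj := (natDegree_smul_le _ _).trans (hq.natDegree_le j hj)
  eval_knot j hj k hk := by simp [iterate_derivative_smul, hq.eval_knot j hj k hk]
  eval_first k hk hke := by simp [iterate_derivative_smul, hq.eval_first k hk hke]
  eval_last j hj k hk hke := by simp [iterate_derivative_smul, hq.eval_last j hj k hk hke]

lemma derivative_comp (hq : IsParitySpline t m (p + 1) e q) :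
    IsParitySpline t m p (e + 1) (derivative ∘ q) where
  natDegree_le j hj :=
    (natDegree_derivative_le _).trans (Nat.sub_le_of_le_add (hq.natDegree_le j hj))
  eval_knot j hj k hk := hq.eval_knot j hj (k + 1) (by omega)
  eval_first k hk hke := hq.eval_first (k + 1) (by omega) (by rwa [add_right_comm, add_assoc])
  eval_last j hj k hk hke :=
    hq.eval_last j hj (k + 1) (by omega) (by rwa [add_right_comm, add_assoc])

end IsParitySpline

lemma sum_range_sub_eq_zero_of_eq_at_knots {F : ℕ → ℝ → ℝ}
    (h_knot : ∀ j, j + 1 < m → F j (t (j + 1)) = F (j + 1) (t (j + 1)))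
    (h_first : F 0 (t 0) = 0) (h_last : ∀ j, j + 1 = m → F j (t m) = 0) :
    ∑ j ∈ Finset.range m, (F j (t (j + 1)) - F j (t j)) = 0 := by
  let g : ℕ → ℝ := fun j => if j < m then F j (t j) else 0
  have h_term : ∀ j ∈ Finset.range m, F j (t (j + 1)) - F j (t j) = g (j + 1) - g j := by
    intro j hj
    have hjm : j < m := Finset.mem_range.1 hj
    rcases Nat.lt_or_eq_of_le (Nat.succ_le_of_lt hjm) with h | rfl
    · simp [g, hjm, h, h_knot j h]
    · simp [g, h_last j rfl]
  rw [Finset.sum_congr rfl h_term, Finset.sum_range_sub]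
  simp [g, h_first]

lemma IsParitySpline.sum_eval_mul_derivative_sub (hq : IsParitySpline t m (p + 2) e q) :
    ∑ j ∈ Finset.range m, ((q j).eval (t (j + 1)) * (derivative (q j)).eval (t (j + 1)) -
      (q j).eval (t j) * (derivative (q j)).eval (t j)) = 0 := by
  have eval_eq (j : ℕ) (hj : j + 1 < m) := hq.eval_knot j hj 0 (by omega)
  have eval_derivative_eq (j : ℕ) (hj : j + 1 < m) := hq.eval_knot j hj 1 (by omega)
  refine sum_range_sub_eq_zero_of_eq_at_knots
    (F := fun j x => (q j).eval x * (derivative (q j)).eval x)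
    (fun j hj => congrArg₂ (· * ·) (eval_eq j hj) (eval_derivative_eq j hj)) ?_ fun j hj => ?_
  all_goals rcases Nat.even_or_odd e with he | he
  · exact mul_eq_zero_of_left (hq.eval_first 0 (by omega) (by simpa)) _
  · exact mul_eq_zero_of_right _ (hq.eval_first 1 (by omega) (odd_one.add_odd he))
  · exact mul_eq_zero_of_left (hq.eval_last j hj 0 (by omega) (by simpa)) _
  · exact mul_eq_zero_of_right _ (hq.eval_last j hj 1 (by omega) (odd_one.add_odd he))

lemma IsParitySpline.pieceInner_derivative_self (hq : IsParitySpline t m (p + 2) e q) :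
    pieceInner t m (derivative ∘ q) (derivative ∘ q) =
      -pieceInner t m q (derivative ∘ derivative ∘ q) := by
  have h_parts (j : ℕ) := intervalIntegral.integral_mul_deriv_eq_deriv_mul
    (a := t j) (b := t (j + 1)) (fun x _ => (q j).hasDerivAt x)
    (fun x _ => (derivative (q j)).hasDerivAt x)
    ((derivative (q j)).continuous.intervalIntegrable _ _)
    ((derivative (derivative (q j))).continuous.intervalIntegrable _ _)
  simp only [pieceInner, Function.comp_apply, h_parts]
  rw [Finset.sum_sub_distrib, hq.sum_eval_mul_derivative_sub, zero_sub, neg_neg]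

lemma neg_two_mul_pieceInner_le (ht : Monotone t) (m : ℕ) (q r : ℕ → ℝ[X]) (c : ℝ) :
    -(2 * c * pieceInner t m q r) ≤ pieceInner t m r r + c ^ 2 * pieceInner t m q q := by
  have h_int (f g : ℝ[X]) (a b : ℝ) :
      IntervalIntegrable (fun x => f.eval x * g.eval x) volume a b :=
    (f.continuous.mul g.continuous).intervalIntegrable a b
  simp only [pieceInner, Finset.mul_sum, ← Finset.sum_neg_distrib, ← Finset.sum_add_distrib,
    ← intervalIntegral.integral_const_mul, ← intervalIntegral.integral_neg]
  refine Finset.sum_le_sum fun j _ => ?_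
  rw [← intervalIntegral.integral_add (h_int _ _ _ _) ((h_int _ _ _ _).const_mul _)]
  refine intervalIntegral.integral_mono_on (ht j.le_succ) ((h_int _ _ _ _).const_mul _).neg
    ((h_int _ _ _ _).add ((h_int _ _ _ _).const_mul _)) fun x _ => ?_
  linarith [sq_nonneg ((r j).eval x + c * (q j).eval x)]

lemma integral_affine_sq (a b r s : ℝ) :
    ∫ x in r..s, (a * x + b) ^ 2 =
      (s - r) * (a * ((r + s) / 2) + b) ^ 2 + a ^ 2 * (s - r) ^ 3 / 12 := by
  have h_deriv (x : ℝ) : HasDerivAt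
      (fun x => a ^ 2 * (x ^ 3 / 3) + a * b * x ^ 2 + b ^ 2 * x) ((a * x + b) ^ 2) x := by
    convert! ((((hasDerivAt_pow 3 x).div_const 3).const_mul (a ^ 2)).add
      ((hasDerivAt_pow 2 x).const_mul (a * b))).add ((hasDerivAt_id x).const_mul (b ^ 2)) using 1
    norm_num
    ring
  rw [intervalIntegral.integral_eq_sub_of_hasDerivAt (fun x _ => h_deriv x)
    (Continuous.intervalIntegrable (by fun_prop) _ _)]
  ring

lemma integral_derivative_sq_le_of_natDegree_le_one {f : ℝ[X]} (hf : f.natDegree ≤ 1) {h a b : ℝ}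
    (hh : 0 < h) (hab : h ≤ b - a) :
    ∫ x in a..b, (derivative f).eval x ^ 2 ≤ 12 / h ^ 2 * ∫ x in a..b, f.eval x ^ 2 := by
  obtain ⟨c, d, rfl⟩ := exists_eq_X_add_C_of_natDegree_le_one hf
  have h_length : 0 < b - a := hh.trans_le hab
  simp only [derivative_add, derivative_mul, derivative_C, derivative_X, eval_add, eval_mul, eval_C,
    eval_X, zero_mul, mul_one, zero_add, add_zero, intervalIntegral.integral_const,
    smul_eq_mul, integral_affine_sq]
  rw [div_mul_eq_mul_div, le_div_iff₀ (by positivity)]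
  calc (b - a) * c ^ 2 * h ^ 2 ≤ (b - a) * c ^ 2 * (b - a) ^ 2 := by gcongr
    _ ≤ 12 * ((b - a) * (c * ((a + b) / 2) + d) ^ 2 + c ^ 2 * (b - a) ^ 3 / 12) := by
      have : 0 ≤ (b - a) * (c * ((a + b) / 2) + d) ^ 2 := by positivity
      linarith

-- Integration by parts and Young's inequality bound `2 σ |u|₁²` by `|u'|₁² + σ² ‖u‖₀²`, and the
-- induction hypothesis for `u'` absorbs `|u'|₁² ≤ σ |u|₁²` into the left-hand side.
lemma IsParitySpline.pieceInner_derivative_self_le {h : ℝ} (hh : 0 < h)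
    (ht : ∀ j, h ≤ t (j + 1) - t j) (hp : 1 ≤ p) (hq : IsParitySpline t m p e q) :
    pieceInner t m (derivative ∘ q) (derivative ∘ q) ≤ 12 / h ^ 2 * pieceInner t m q q := by
  induction p, hp using Nat.le_induction generalizing e q with
  | base =>
    simp only [pieceInner, Function.comp_apply, ← sq, Finset.mul_sum]
    exact Finset.sum_le_sum fun j hj => integral_derivative_sq_le_of_natDegree_le_one
      (hq.natDegree_le j (Finset.mem_range.1 hj)) hh (ht j)
  | succ p hp ih =>
    obtain ⟨p, rfl⟩ := Nat.exists_eq_add_of_le' hp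
    have ht_mono : Monotone t := monotone_nat_of_le_succ fun j => by linarith [ht j]
    set σ := 12 / h ^ 2
    have hσ : 0 < σ := by positivity
    set N := pieceInner t m q q
    set N' := pieceInner t m (derivative ∘ q) (derivative ∘ q) with hN'
    have h_young := neg_two_mul_pieceInner_le ht_mono m q (derivative ∘ derivative ∘ q) σ
    have h_mul : σ * (2 * N') ≤ σ * (N' + σ * N) := by
      calc σ * (2 * N')
          = -(2 * σ * pieceInner t m q (derivative ∘ derivative ∘ q)) := by
            rw [hN', hq.pieceInner_derivative_self]
            ring
        _ ≤ σ * N' + σ ^ 2 * N := h_young.trans (add_le_add_left (ih hq.derivative_comp) _)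
        _ = σ * (N' + σ * N) := by ring
    linarith [le_of_mul_le_mul_left h_mul hσ]

end PiecewisePolynomials

section UnivariateSplines

open Polynomial Filter Topology ENNReal

lemma iteratedDeriv_polynomial_eval (f : ℝ[X]) (k : ℕ) :
    iteratedDeriv k f.eval = (derivative^[k] f).eval := by
  induction k generalizing f with
  | zero => simp
  | succ k ih =>
    have h_deriv : deriv f.eval = (derivative f).eval := funext fun _ => f.deriv
    rw [iteratedDeriv_succ', h_deriv, ih, Function.iterate_succ_apply]

lemma continuousAt_iteratedDeriv {u : ℝ → ℝ} {n : WithTop ℕ∞} {x : ℝ} (hu : ContDiffAt ℝ n u x)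
    {k : ℕ} (hk : k ≤ n) : ContinuousAt (iteratedDeriv k u) x := by
  rw [iteratedDeriv_eq_equiv_comp]
  exact (LinearIsometryEquiv.continuous _).continuousAt.comp (hu.continuousAt_iteratedFDeriv hk)

lemma iteratedDeriv_eq_of_eventuallyEq_nhdsWithin {u : ℝ → ℝ} {n : WithTop ℕ∞} {x : ℝ}
    (hu : ContDiffAt ℝ n u x) {s : Set ℝ} (hs : IsOpen s) [NeBot (𝓝[s] x)] {f : ℝ[X]}
    (hf : u =ᶠ[𝓝[s] x] f.eval) {k : ℕ} (hk : k ≤ n) :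
    iteratedDeriv k u x = (derivative^[k] f).eval x := by
  have h_near : iteratedDeriv k u =ᶠ[𝓝[s] x] (derivative^[k] f).eval := by
    filter_upwards [eventually_eventually_nhdsWithin.2 hf, self_mem_nhdsWithin] with y hy hys
    rw [hs.nhdsWithin_eq hys] at hy
    rw [EventuallyEq.iteratedDeriv_eq k hy, iteratedDeriv_polynomial_eval]
  have h_left := ((continuousAt_iteratedDeriv hu hk).tendsto.mono_left nhdsWithin_le_nhds).congr'
    h_near
  have h_right := ((derivative^[k] f).continuous.tendsto x).mono_left (nhdsWithin_le_nhds (s := s))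
  exact tendsto_nhds_unique h_left h_right

lemma integral_eq_sum_of_eqOn_Ioo {t : ℕ → ℝ} (ht : Monotone t) {m : ℕ} {F : ℝ → ℝ}
    {Q : ℕ → ℝ → ℝ} (hQ : ∀ j, Continuous (Q j))
    (hF : ∀ j < m, EqOn F (Q j) (Ioo (t j) (t (j + 1)))) :
    ∫ x in t 0..t m, F x = ∑ j ∈ Finset.range m, ∫ x in t j..t (j + 1), Q j x := by
  have h_uIoo (j : ℕ) (hj : j < m) : EqOn F (Q j) (uIoo (t j) (t (j + 1))) := by
    rw [uIoo_of_le (ht j.le_succ)]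
    exact hF j hj
  rw [← intervalIntegral.sum_integral_adjacent_intervals fun j hj =>
    ((hQ j).intervalIntegrable _ _).congr_uIoo (h_uIoo j hj).symm]
  exact Finset.sum_congr rfl fun j hj =>
    intervalIntegral.integral_congr_uIoo (h_uIoo j (Finset.mem_range.1 hj))

lemma ae_restrict_Ioo_exists_mem_Ioo {t : ℕ → ℝ} (ht : Monotone t) (m : ℕ) :
    ∀ᵐ x ∂volume.restrict (Ioo (t 0) (t m)), ∃ j < m, x ∈ Ioo (t j) (t (j + 1)) := by
  have h_knots : ∀ᵐ x ∂volume.restrict (Ioo (t 0) (t m)), x ∉ range t :=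
    ae_restrict_of_ae ((countable_range t).ae_notMem _)
  filter_upwards [ae_restrict_mem measurableSet_Ioo, h_knots] with x hx hxt
  have hx_mem := Ioo_subset_Ioc_self hx
  rw [← ht.biUnion_Ico_Ioc_map_succ] at hx_mem
  obtain ⟨j, hj, hxj⟩ := mem_iUnion₂.1 hx_mem
  exact ⟨j, hj.2, hxj.1, hxj.2.lt_of_ne fun h => hxt ⟨j + 1, h.symm⟩⟩

lemma memLp_top_of_ae_exists_eq_eval {a b : ℝ} {F : ℝ → ℝ}
    (hF : AEStronglyMeasurable F (volume.restrict (Ioo a b))) {m : ℕ} {q : ℕ → ℝ[X]}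
    (hFq : ∀ᵐ x ∂volume.restrict (Ioo a b), ∃ j < m, F x = (q j).eval x) :
    MemLp F ∞ (volume.restrict (Ioo a b)) := by
  have h_bound (j : ℕ) : ∃ C, ∀ x ∈ Icc a b, ‖(q j).eval x‖ ≤ C :=
    isCompact_Icc.exists_bound_of_continuousOn (q j).continuous.continuousOn
  choose C hC using h_bound
  refine memLp_top_of_bound hF (∑ j ∈ Finset.range m, |C j|) ?_
  filter_upwards [ae_restrict_mem measurableSet_Ioo, hFq] with x hx ⟨j, hj, hxj⟩
  calc ‖F x‖ ≤ |C j| := hxj ▸ (hC j x (Ioo_subset_Icc_self hx)).trans (le_abs_self _)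
    _ ≤ ∑ j ∈ Finset.range m, |C j| :=
      Finset.single_le_sum (f := fun j => |C j|) (fun _ _ => abs_nonneg _) (Finset.mem_range.2 hj)

/-- The functions on `ℝ` that on each `[t j, t (j + 1)]`, `j < m`, coincide with the `j`-th piece of
a spline satisfying `IsParitySpline`. -/
def paritySplineSpace (t : ℕ → ℝ) (m p e : ℕ) : Submodule ℝ (ℝ → ℝ) where
  carrier := {u | ∃ q, IsParitySpline t m p e q ∧
    ∀ j < m, EqOn u (q j).eval (Icc (t j) (t (j + 1)))}
  zero_mem' := ⟨0, .zero, fun _ _ _ _ => by simp⟩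
  add_mem' := by
    rintro u v ⟨q, hq, huq⟩ ⟨r, hr, hvr⟩
    exact ⟨q + r, hq.add hr, fun j hj x hx => by simp [huq j hj hx, hvr j hj hx]⟩
  smul_mem' := by
    rintro c u ⟨q, hq, huq⟩
    exact ⟨c • q, hq.smul c, fun j hj x hx => by simp [huq j hj hx]⟩

lemma deriv_eq_of_eqOn_Icc {u : ℝ → ℝ} {f : ℝ[X]} {a b x : ℝ} (hu : EqOn u f.eval (Icc a b))
    (hx : x ∈ Ioo a b) : deriv u x = (derivative f).eval x :=
  ((hu.eventuallyEq_of_mem (Icc_mem_nhds hx.1 hx.2)).deriv_eq).trans f.deriv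

lemma integral_deriv_sq_le_of_mem_paritySplineSpace {t : ℕ → ℝ} {m p e : ℕ} {h : ℝ} (hh : 0 < h)
    (ht : ∀ j, h ≤ t (j + 1) - t j) (hp : 1 ≤ p) {u : ℝ → ℝ}
    (hu : u ∈ paritySplineSpace t m p e) :
    ∫ x in t 0..t m, deriv u x ^ 2 ≤ 12 / h ^ 2 * ∫ x in t 0..t m, u x ^ 2 := by
  obtain ⟨q, hq, huq⟩ := hu
  have ht_mono : Monotone t := monotone_nat_of_le_succ fun j => by linarith [ht j]
  have h_norm : ∫ x in t 0..t m, u x ^ 2 = pieceInner t m q q :=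
    integral_eq_sum_of_eqOn_Ioo ht_mono (by fun_prop) fun j hj x hx => by
      rw [huq j hj (Ioo_subset_Icc_self hx), sq]
  have h_seminorm : ∫ x in t 0..t m, deriv u x ^ 2 =
      pieceInner t m (derivative ∘ q) (derivative ∘ q) :=
    integral_eq_sum_of_eqOn_Ioo ht_mono (by fun_prop) fun j hj x hx => by
      rw [deriv_eq_of_eqOn_Icc (huq j hj) hx, sq, Function.comp_apply]
  rw [h_norm, h_seminorm]
  exact hq.pieceInner_derivative_self_le hh ht hp

/-- The knots `j h`, `h = 1/m`, of the uniform partition. -/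
def uniformKnot (m j : ℕ) : ℝ := j / m

variable {m p : ℕ} {u : ℝ → ℝ}

lemma uniformKnot_zero (m : ℕ) : uniformKnot m 0 = 0 := by simp [uniformKnot]

lemma uniformKnot_self (hm : 1 ≤ m) : uniformKnot m m = 1 :=
  div_self (Nat.cast_ne_zero.2 (by omega))

lemma uniformKnot_succ_sub (m j : ℕ) : uniformKnot m (j + 1) - uniformKnot m j = 1 / m := by
  simp only [uniformKnot, Nat.cast_add_one]
  ring

lemma strictMono_uniformKnot (hm : 1 ≤ m) : StrictMono (uniformKnot m) :=
  strictMono_nat_of_lt_succ fun j => sub_pos.1 <| by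
    rw [uniformKnot_succ_sub]
    positivity

lemma Icc_uniformKnot_subset_pieceSet (m j : ℕ) :
    Icc (uniformKnot m j) (uniformKnot m (j + 1)) ⊆ pieceSet m j := by
  intro x hx
  simp only [uniformKnot, Nat.cast_add_one] at hx
  left
  split_ifs with hj
  · simpa [hj] using hx.2
  · exact hx

lemma Iic_uniformKnot_subset_pieceSet (m : ℕ) : Iic (uniformKnot m 1) ⊆ pieceSet m 0 := by
  intro x hx
  left
  simpa [uniformKnot] using hx

lemma Ici_uniformKnot_subset_pieceSet (m : ℕ) :
    Ici (uniformKnot (m + 1) m) ⊆ pieceSet (m + 1) m := by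
  intro x hx
  right
  simpa [uniformKnot] using hx

lemma h1semiSq_le_of_mem_paritySplineSpace (hm : 1 ≤ m) (hp : 1 ≤ p) {e : ℕ}
    (hu : u ∈ paritySplineSpace (uniformKnot m) m p e) :
    h1semiSq u ≤ 12 * (m : ℝ) ^ 2 * l2normSq u := by
  have h_bound := integral_deriv_sq_le_of_mem_paritySplineSpace (h := 1 / m) (by positivity)
    (fun j => (uniformKnot_succ_sub m j).ge) hp hu
  rw [uniformKnot_zero, uniformKnot_self hm, intervalIntegral.integral_of_le zero_le_one,
    intervalIntegral.integral_of_le zero_le_one, integral_Ioc_eq_integral_Ioo,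
    integral_Ioc_eq_integral_Ioo] at h_bound
  simpa [h1semiSq, l2normSq] using h_bound

lemma IsSpline.exists_pieces (hu : IsSpline m p u) :
    ∃ q : ℕ → ℝ[X], ∀ j < m, (q j).natDegree ≤ p ∧ EqOn u (q j).eval (pieceSet m j) := by
  choose! q hq using hu.2
  exact ⟨q, hq⟩

lemma IsSpline.eval_iterate_derivative_eq (hu : IsSpline m p u) {q : ℕ → ℝ[X]}
    (huq : ∀ j < m, EqOn u (q j).eval (pieceSet m j)) {j k : ℕ} (hj : j + 1 < m) (hk : k < p) :
    (derivative^[k] (q j)).eval (uniformKnot m (j + 1)) =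
      (derivative^[k] (q (j + 1))).eval (uniformKnot m (j + 1)) := by
  have h_mono := strictMono_uniformKnot (m := m) (by omega)
  have h_mem : uniformKnot m (j + 1) ∈ Ioo (0 : ℝ) 1 := by
    rw [← uniformKnot_zero m, ← uniformKnot_self (m := m) (by omega)]
    exact ⟨h_mono (by omega), h_mono hj⟩
  have h_smooth := hu.1.contDiffAt (isOpen_Ioo.mem_nhds h_mem)
  have hk' : (k : WithTop ℕ∞) ≤ (p - 1 : ℕ) := by
    norm_cast
    omega
  have h_left : u =ᶠ[𝓝[<] uniformKnot m (j + 1)] (q j).eval :=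
    ((huq j (by omega)).mono (Icc_uniformKnot_subset_pieceSet m j)).eventuallyEq_of_mem
      (Icc_mem_nhdsLT (h_mono j.lt_succ_self))
  have h_right : u =ᶠ[𝓝[>] uniformKnot m (j + 1)] (q (j + 1)).eval :=
    ((huq (j + 1) hj).mono (Icc_uniformKnot_subset_pieceSet m (j + 1))).eventuallyEq_of_mem
      (Icc_mem_nhdsGT (h_mono (j + 1).lt_succ_self))
  rw [← iteratedDeriv_eq_of_eventuallyEq_nhdsWithin h_smooth isOpen_Iio h_left hk',
    ← iteratedDeriv_eq_of_eventuallyEq_nhdsWithin h_smooth isOpen_Ioi h_right hk']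

lemma IsSpline0.mem_paritySplineSpace (hm : 1 ≤ m) (hu : IsSpline0 m p u) :
    u ∈ paritySplineSpace (uniformKnot m) m p 1 := by
  obtain ⟨q, hq⟩ := hu.1.exists_pieces
  have huq (j : ℕ) (hj : j < m) := (hq j hj).2
  have h_mono := strictMono_uniformKnot hm
  have h_near_zero : u =ᶠ[𝓝 (uniformKnot m 0)] (q 0).eval :=
    ((huq 0 hm).mono (Iic_uniformKnot_subset_pieceSet m)).eventuallyEq_of_mem
      (Iic_mem_nhds (h_mono zero_lt_one))
  refine ⟨q, ⟨fun j hj => (hq j hj).1, fun j hj k hk => hu.1.eval_iterate_derivative_eq huq hj hk,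
    fun k hk hke => ?_, ?_⟩,
    fun j hj => (huq j hj).mono (Icc_uniformKnot_subset_pieceSet m j)⟩
  · obtain ⟨l, rfl⟩ : Odd k := by simpa [Nat.even_add_one] using hke
    rw [← congrFun (iteratedDeriv_polynomial_eval _ _), ← h_near_zero.iteratedDeriv_eq,
      uniformKnot_zero]
    exact (hu.2 l hk).1
  · rintro j rfl k hk hke
    have h_near_one : u =ᶠ[𝓝 (uniformKnot (j + 1) (j + 1))] (q j).eval :=
      ((huq j j.lt_succ_self).mono (Ici_uniformKnot_subset_pieceSet j)).eventuallyEq_of_mem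
        (Ici_mem_nhds (h_mono j.lt_succ_self))
    obtain ⟨l, rfl⟩ : Odd k := by simpa [Nat.even_add_one] using hke
    rw [← congrFun (iteratedDeriv_polynomial_eval _ _), ← h_near_one.iteratedDeriv_eq,
      uniformKnot_self hm]
    exact (hu.2 l hk).2

lemma ae_exists_eventuallyEq_piece (hm : 1 ≤ m) {q : ℕ → ℝ[X]}
    (huq : ∀ j < m, EqOn u (q j).eval (pieceSet m j)) :
    ∀ᵐ x ∂volume.restrict (Ioo (0 : ℝ) 1), ∃ j < m, u =ᶠ[𝓝 x] (q j).eval := by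
  have h_ae := ae_restrict_Ioo_exists_mem_Ioo (strictMono_uniformKnot hm).monotone m
  rw [uniformKnot_zero, uniformKnot_self hm] at h_ae
  filter_upwards [h_ae] with x ⟨j, hj, hx⟩
  exact ⟨j, hj, ((huq j hj).mono (Icc_uniformKnot_subset_pieceSet m j)).eventuallyEq_of_mem
    (Icc_mem_nhds hx.1 hx.2)⟩

namespace IsSpline

lemma memLp_top (hm : 1 ≤ m) (hu : IsSpline m p u) :
    MemLp u ∞ (volume.restrict (Ioo (0 : ℝ) 1)) := by
  obtain ⟨q, hq⟩ := hu.exists_pieces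
  refine memLp_top_of_ae_exists_eq_eval (m := m) (q := q)
    (hu.1.continuousOn.aestronglyMeasurable measurableSet_Ioo) ?_
  filter_upwards [ae_exists_eventuallyEq_piece hm fun j hj => (hq j hj).2] with x ⟨j, hj, hx⟩
  exact ⟨j, hj, hx.eq_of_nhds⟩

lemma memLp_top_deriv (hm : 1 ≤ m) (hu : IsSpline m p u) :
    MemLp (deriv u) ∞ (volume.restrict (Ioo (0 : ℝ) 1)) := by
  obtain ⟨q, hq⟩ := hu.exists_pieces
  refine memLp_top_of_ae_exists_eq_eval (m := m) (q := derivative ∘ q)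
    (aestronglyMeasurable_deriv _ _) ?_
  filter_upwards [ae_exists_eventuallyEq_piece hm fun j hj => (hq j hj).2] with x ⟨j, hj, hx⟩
  exact ⟨j, hj, hx.deriv_eq.trans (q j).deriv⟩

lemma ae_differentiableAt (hm : 1 ≤ m) (hu : IsSpline m p u) :
    ∀ᵐ x ∂volume.restrict (Ioo (0 : ℝ) 1), DifferentiableAt ℝ u x := by
  obtain ⟨q, hq⟩ := hu.exists_pieces
  filter_upwards [ae_exists_eventuallyEq_piece hm fun j hj => (hq j hj).2] with x ⟨j, _, hx⟩
  exact hx.differentiableAt_iff.2 (q j).differentiableAt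

end IsSpline

end UnivariateSplines

section TensorProducts

open ENNReal Function

variable {d m p : ℕ} {α : Fin d → Bool} {v : (Fin d → ℝ) → ℝ}

lemma restrict_cube_eq_pi (d : ℕ) :
    (volume : Measure (Fin d → ℝ)).restrict (cube d) =
      Measure.pi fun _ => volume.restrict (Ioo (0 : ℝ) 1) :=
  Measure.restrict_pi_pi _ _

instance isProbabilityMeasure_restrict_Ioo :
    IsProbabilityMeasure ((volume : Measure ℝ).restrict (Ioo 0 1)) :=
  ⟨by simp⟩

instance isProbabilityMeasure_restrict_cube (d : ℕ) :
    IsProbabilityMeasure ((volume : Measure (Fin d → ℝ)).restrict (cube d)) := by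
  rw [restrict_cube_eq_pi]
  infer_instance

lemma measurePreserving_eval_cube (i : Fin d) :
    MeasurePreserving (eval i) (volume.restrict (cube d)) (volume.restrict (Ioo (0 : ℝ) 1)) := by
  rw [restrict_cube_eq_pi]
  exact measurePreserving_eval _ i

lemma memLp_top_prod_eval {f : Fin d → ℝ → ℝ}
    (hf : ∀ i, MemLp (f i) ∞ (volume.restrict (Ioo (0 : ℝ) 1))) :
    MemLp (fun x => ∏ i, f i (x i)) ∞ (volume.restrict (cube d)) := by
  simpa using MemLp.prod' (s := Finset.univ) (p := fun _ => ∞) fun i _ =>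
    (hf i).comp_measurePreserving (measurePreserving_eval_cube i)

lemma prod_apply_update {ι : Type*} [Fintype ι] [DecidableEq ι] (f : ι → ℝ → ℝ) (x : ι → ℝ)
    (i : ι) (t : ℝ) :
    ∏ k, f k (update x i t k) = f i t * ∏ k ∈ Finset.univ \ {i}, f k (x k) := by
  simp only [apply_update f, Finset.prod_update_of_mem (Finset.mem_univ i)]

lemma pd_prod (f : Fin d → ℝ → ℝ) (i : Fin d) :
    pd d i (fun x => ∏ k, f k (x k)) = fun x => ∏ k, update f i (deriv (f i)) k (x k) := by
  funext x
  simp only [pd, prod_apply_update, deriv_mul_const_field,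
    apply_update (fun k (g : ℝ → ℝ) => g (x k)), Finset.prod_update_of_mem (Finset.mem_univ i)]

/-- A pointwise version of `W^{1,∞}(Ω)`: essentially bounded functions whose classical partial
derivatives exist almost everywhere and are essentially bounded. Existence is required separately
since `pd` is `0` where the derivative does not exist. -/
def w1Infty (d : ℕ) : Submodule ℝ ((Fin d → ℝ) → ℝ) where
  carrier := {v | MemLp v ∞ (volume.restrict (cube d)) ∧ ∀ i,
    MemLp (pd d i v) ∞ (volume.restrict (cube d)) ∧
    ∀ᵐ x ∂volume.restrict (cube d), DifferentiableAt ℝ (fun t => v (update x i t)) (x i)}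
  zero_mem' := by
    have h_pd (i : Fin d) : pd d i 0 = 0 := by
      funext x
      simp [pd]
    refine ⟨MemLp.zero, fun i => ⟨?_, .of_forall fun x => by simp⟩⟩
    rw [h_pd]
    exact MemLp.zero
  add_mem' := by
    rintro v w ⟨hv, hv'⟩ ⟨hw, hw'⟩
    refine ⟨hv.add hw, fun i => ⟨((hv' i).1.add (hw' i).1).ae_eq ?_, ?_⟩⟩
    all_goals filter_upwards [(hv' i).2, (hw' i).2] with x hvx hwx
    · exact (deriv_fun_add hvx hwx).symm
    · exact hvx.add hwx
  smul_mem' := by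
    rintro c v ⟨hv, hv'⟩
    refine ⟨hv.const_smul c, fun i => ⟨((hv' i).1.const_smul c).ae_eq ?_, ?_⟩⟩
    all_goals filter_upwards [(hv' i).2] with x hvx
    · exact (deriv_fun_const_smul c hvx).symm
    · exact hvx.const_smul c

lemma IsSplineC.isSpline {b : Bool} {u : ℝ → ℝ} (hu : IsSplineC m p b u) : IsSpline m p u := by
  cases b <;> exact hu.1

lemma prod_mem_w1Infty (hm : 1 ≤ m) {f : Fin d → ℝ → ℝ} (hf : ∀ i, IsSpline m p (f i)) :
    (fun x => ∏ i, f i (x i)) ∈ w1Infty d := by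
  refine ⟨memLp_top_prod_eval fun i => (hf i).memLp_top hm, fun i => ⟨?_, ?_⟩⟩
  · rw [pd_prod]
    refine memLp_top_prod_eval fun k => ?_
    rcases eq_or_ne k i with rfl | hk
    · simpa using (hf k).memLp_top_deriv hm
    · simpa [hk] using (hf k).memLp_top hm
  · filter_upwards [(measurePreserving_eval_cube i).quasiMeasurePreserving.ae
      ((hf i).ae_differentiableAt hm)] with x hx
    simp only [prod_apply_update]
    exact hx.mul_const _

lemma tensorSplineSub_le_w1Infty (hm : 1 ≤ m) : TensorSplineSub d m p α ≤ w1Infty d := by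
  refine Submodule.span_le.2 ?_
  rintro _ ⟨f, hf, rfl⟩
  exact prod_mem_w1Infty hm fun i => (hf i).isSpline

lemma integrable_sq_of_mem_w1Infty (hv : v ∈ w1Infty d) :
    Integrable (fun x => v x ^ 2) (volume.restrict (cube d)) :=
  (hv.1.mono_exponent le_top).integrable_sq

lemma integrable_pd_sq_of_mem_w1Infty (hv : v ∈ w1Infty d) (i : Fin d) :
    Integrable (fun x => pd d i v x ^ 2) (volume.restrict (cube d)) :=
  ((hv.2 i).1.mono_exponent le_top).integrable_sq

lemma aForm_self_of_mem_w1Infty (hv : v ∈ w1Infty d) :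
    aForm d v v = l2normSqD d v + ∑ i, ∫ x in cube d, pd d i v x ^ 2 := by
  have h_pd (i : Fin d) := integrable_pd_sq_of_mem_w1Infty hv i
  simp only [aForm, ← sq]
  rw [integral_add (integrable_finsetSum _ fun i _ => h_pd i) (integrable_sq_of_mem_w1Infty hv),
    integral_finsetSum _ fun i _ => h_pd i, add_comm, l2normSqD]

lemma comp_update_mem_paritySplineSpace (hm : 1 ≤ m) (hv : v ∈ TensorSplineSub d m p α) {i : Fin d}
    (hi : α i = false) (x : Fin d → ℝ) :
    v ∘ update x i ∈ paritySplineSpace (uniformKnot m) m p 1 := by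
  suffices h_le : TensorSplineSub d m p α ≤
      (paritySplineSpace (uniformKnot m) m p 1).comap (LinearMap.funLeft ℝ ℝ (update x i)) from
    h_le hv
  refine Submodule.span_le.2 ?_
  rintro _ ⟨f, hf, rfl⟩
  have h_factor : IsSpline0 m p (f i) := by simpa [hi, IsSplineC] using hf i
  have h_slice : (fun y : Fin d → ℝ => ∏ k, f k (y k)) ∘ update x i =
      (∏ k ∈ Finset.univ \ {i}, f k (x k)) • f i := by
    funext t
    simp [prod_apply_update, mul_comm]
  change (fun y : Fin d → ℝ => ∏ k, f k (y k)) ∘ update x i ∈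
    paritySplineSpace (uniformKnot m) m p 1
  rw [h_slice]
  exact Submodule.smul_mem _ _ (h_factor.mem_paritySplineSpace hm)

lemma measurePreserving_insertNth_cube {n : ℕ} (i : Fin (n + 1)) :
    MeasurePreserving (MeasurableEquiv.piFinSuccAbove (fun _ => ℝ) i).symm
      ((volume.restrict (Ioo (0 : ℝ) 1)).prod (volume.restrict (cube n)))
      (volume.restrict (cube (n + 1))) := by
  simp only [restrict_cube_eq_pi]
  exact (measurePreserving_piFinSuccAbove (fun _ => volume.restrict (Ioo (0 : ℝ) 1)) i).symm

lemma setIntegral_cube_mono_of_slices (i : Fin d) {F G : (Fin d → ℝ) → ℝ}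
    (hF : IntegrableOn F (cube d)) (hG : IntegrableOn G (cube d))
    (hFG : ∀ x, ∫ t in Ioo (0 : ℝ) 1, F (update x i t) ≤ ∫ t in Ioo (0 : ℝ) 1, G (update x i t)) :
    ∫ x in cube d, F x ≤ ∫ x in cube d, G x := by
  cases d with
  | zero => exact i.elim0
  | succ n =>
    have h_equiv := measurePreserving_insertNth_cube i
    have hF_prod := h_equiv.integrable_comp_of_integrable hF
    have hG_prod := h_equiv.integrable_comp_of_integrable hG
    simp only [comp_def] at hF_prod hG_prod
    rw [← h_equiv.integral_comp' F, ← h_equiv.integral_comp' G, integral_prod_symm _ hF_prod,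
      integral_prod_symm _ hG_prod]
    refine integral_mono hF_prod.integral_prod_right hG_prod.integral_prod_right fun y => ?_
    have h_slice := hFG (i.insertNth 0 y)
    simp only [Fin.update_insertNth] at h_slice
    exact h_slice

lemma setIntegral_pd_sq_le (hm : 1 ≤ m) (hp : 1 ≤ p) (hv : v ∈ TensorSplineSub d m p α) {i : Fin d}
    (hi : α i = false) :
    ∫ x in cube d, pd d i v x ^ 2 ≤ 12 * (m : ℝ) ^ 2 * l2normSqD d v := by
  have hv_reg := tensorSplineSub_le_w1Infty hm hv
  rw [l2normSqD, ← integral_const_mul]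
  refine setIntegral_cube_mono_of_slices i (integrable_pd_sq_of_mem_w1Infty hv_reg i)
    ((integrable_sq_of_mem_w1Infty hv_reg).const_mul _) fun x => ?_
  have h_slice := h1semiSq_le_of_mem_paritySplineSpace hm hp
    (comp_update_mem_paritySplineSpace hm hv hi x)
  rw [integral_const_mul]
  simpa [pd, h1semiSq, l2normSq, comp_def] using h_slice

theorem local_smoother_bounds_2d_general (hm : 1 ≤ m) (hp : 1 ≤ p)
    (hv : v ∈ TensorSplineSub d m p α) :
    aForm d v v = l2normSqD d v + ∑ i, ∫ x in cube d, pd d i v x ^ 2 ∧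
    aForm d v v ≤ l2normSqD d v +
      ∑ i, if α i then ∫ x in cube d, pd d i v x ^ 2 else 12 * (m : ℝ) ^ 2 * l2normSqD d v := by
  have h_eq := aForm_self_of_mem_w1Infty (tensorSplineSub_le_w1Infty hm hv)
  refine ⟨h_eq, h_eq.trans_le (add_le_add_right (Finset.sum_le_sum fun i _ => ?_) _)⟩
  split_ifs with hi
  · exact le_rfl
  · exact setIntegral_pd_sq_le hm hp hv (Bool.eq_false_of_not_eq_true hi)

end TensorProducts

/-- choice of the local smoothing operators, 2D: with
`σ = 12h⁻² = 12m²`, the restrictions `A_α = Q_α′AQ_α` of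
`A = K⊗M + M⊗K + M⊗M` to the subspaces `S_α ⊂ S²` satisfy, in quadratic form,
`A₀₀ ≤ (1+2σ)M₀⊗M₀ = L₀₀`, `A₀₁ ≤ M₀⊗((1+σ)M₁+K₁) = L₀₁`,
`A₁₀ ≤ ((1+σ)M₁+K₁)⊗M₀ = L₁₀`, and
`A₁₁ = M₁⊗M₁ + K₁⊗M₁ + M₁⊗K₁ = L₁₁` (equality). -/
theorem local_smoother_bounds_2d :
    ∀ m p : ℕ, 1 ≤ m → 1 ≤ p →
      (∀ v, v ∈ TensorSplineSub 2 m p ![false, false] →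
        aForm 2 v v ≤ (1 + 2 * (12 * (m : ℝ) ^ 2)) * l2normSqD 2 v) ∧
      (∀ v, v ∈ TensorSplineSub 2 m p ![false, true] →
        aForm 2 v v ≤ (1 + 12 * (m : ℝ) ^ 2) * l2normSqD 2 v +
          ∫ x in cube 2, pd 2 1 v x ^ 2) ∧
      (∀ v, v ∈ TensorSplineSub 2 m p ![true, false] →
        aForm 2 v v ≤ (1 + 12 * (m : ℝ) ^ 2) * l2normSqD 2 v +
          ∫ x in cube 2, pd 2 0 v x ^ 2) ∧
      (∀ v, v ∈ TensorSplineSub 2 m p ![true, true] →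
        aForm 2 v v = l2normSqD 2 v + (∫ x in cube 2, pd 2 0 v x ^ 2) +
          ∫ x in cube 2, pd 2 1 v x ^ 2) := by
  intro m p hm hp
  refine ⟨fun v hv => ?_, fun v hv => ?_, fun v hv => ?_, fun v hv => ?_⟩ <;>
    have ⟨h_eq, h_le⟩ := local_smoother_bounds_2d_general hm hp hv <;>
    simp only [Fin.sum_univ_two, Matrix.cons_val, Bool.false_eq_true, reduceIte] at h_eq h_le <;>
    linarith

end SplineMG
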